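/- arXiv:1704.08191 — 9 statements merged into one kernel-verified Lean document; each statement's English description precedes it below -/
import Mathlib

section
/- For all real numbers α > 0, β > 0 and every real number m, the modified extension of the classical beta function admits the series expansion B(α,β;m) = Σ_{n=0}^∞ (m^n / n!) · B(α+n, β+n), where B(x,y) denotes the classical Euler beta function; in particular the series on the right-hand side converges to the value of the defining integral. -/
/-!
The exponential series turns the integrand of `mecbf α β m` into `∑ mⁿ / n! · w t · (t (1 - t))ⁿ`,
where `w t = t ^ (α - 1) (1 - t) ^ (β - 1)` is the beta weight, and `w t · (t (1 - t))ⁿ` is the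
integrand of `betaFn (α + n) (β + n)`. As `w` is integrable and `t (1 - t)` is bounded on `[0, 1]`,
dominated convergence allows integration term by term.
-/

open MeasureTheory Real

/-- The modified extension of the classical beta function (MECBF). -/
noncomputable def mecbf (α β m : ℝ) : ℝ :=
  ∫ t in (0:ℝ)..1, t ^ (α - 1) * (1 - t) ^ (β - 1) * Real.exp (m * t * (1 - t))

/-- The classical Euler beta function. -/
noncomputable def betaFn (x y : ℝ) : ℝ :=
  ∫ t in (0:ℝ)..1, t ^ (x - 1) * (1 - t) ^ (y - 1)

section PowerSeries

variable {X 𝕜 : Type*} [MeasurableSpace X] [RCLike 𝕜] {μ : Measure X} {w g : X → 𝕜} {R : ℝ}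

theorem hasSum_mul_integral_mul_pow {c : ℕ → 𝕜} (hc : Summable fun n ↦ ‖c n‖ * R ^ n)
    (hw : Integrable w μ) (hg : AEStronglyMeasurable g μ) (hgR : ∀ᵐ x ∂μ, ‖g x‖ ≤ R) :
    HasSum (fun n ↦ c n * ∫ x, w x * g x ^ n ∂μ) (∫ x, w x * ∑' n, c n * g x ^ n ∂μ) := by
  have term_le {x : X} (hx : ‖g x‖ ≤ R) (n : ℕ) : ‖c n * g x ^ n‖ ≤ ‖c n‖ * R ^ n := by
    rw [norm_mul, norm_pow]
    gcongr
  simp only [← integral_const_mul, mul_left_comm (c _)]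
  refine hasSum_integral_of_dominated_convergence (fun n x ↦ ‖w x‖ * (‖c n‖ * R ^ n))
    (fun n ↦ hw.1.mul ((hg.pow n).const_mul (c n))) (fun n ↦ ?_)
    (.of_forall fun x ↦ hc.mul_left _) ?_ ?_
  · filter_upwards [hgR] with x hx
    rw [norm_mul]
    gcongr
    exact term_le hx n
  · simp only [tsum_mul_left]
    exact hw.norm.mul_const _
  · filter_upwards [hgR] with x hx
    exact (hc.of_norm_bounded (term_le hx)).hasSum.mul_left _

theorem hasSum_pow_div_factorial_mul_integral_mul_pow (m : 𝕜) (hw : Integrable w μ)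
    (hg : AEStronglyMeasurable g μ) (hgR : ∀ᵐ x ∂μ, ‖g x‖ ≤ R) :
    HasSum (fun n : ℕ ↦ m ^ n / (n.factorial : 𝕜) * ∫ x, w x * g x ^ n ∂μ)
      (∫ x, w x * NormedSpace.exp (m * g x) ∂μ) := by
  have hc : Summable fun n : ℕ ↦ ‖m ^ n / (n.factorial : 𝕜)‖ * R ^ n := by
    simpa only [norm_div, norm_pow, RCLike.norm_natCast, mul_pow, div_mul_eq_mul_div] using
      Real.summable_pow_div_factorial (‖m‖ * R)
  have exp_eq (x : X) :
      NormedSpace.exp (m * g x) = ∑' n : ℕ, m ^ n / (n.factorial : 𝕜) * g x ^ n := by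
    simp only [NormedSpace.exp_eq_tsum_div, mul_pow, div_mul_eq_mul_div]
  simpa only [exp_eq] using hasSum_mul_integral_mul_pow hc hw hg hgR

end PowerSeries

theorem intervalIntegrable_rpow_mul_one_sub_rpow {α β : ℝ} (hα : 0 < α) (hβ : 0 < β) :
    IntervalIntegrable (fun t : ℝ ↦ t ^ (α - 1) * (1 - t) ^ (β - 1)) volume 0 1 := by
  have hbeta := Complex.betaIntegral_convergent (u := α) (v := β) (by simpa) (by simpa)
  rw [intervalIntegrable_iff_integrableOn_Ioc_of_le zero_le_one] at hbeta ⊢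
  refine IntegrableOn.congr_fun hbeta.re (fun t ht ↦ ?_) measurableSet_Ioc
  have h1t : 0 ≤ 1 - t := sub_nonneg.2 ht.2
  have ofReal_weight : (t : ℂ) ^ ((α : ℂ) - 1) * (1 - (t : ℂ)) ^ ((β : ℂ) - 1) =
      ((t ^ (α - 1) * (1 - t) ^ (β - 1) : ℝ) : ℂ) := by
    simp only [Complex.ofReal_mul, Complex.ofReal_cpow ht.1.le, Complex.ofReal_cpow h1t,
      Complex.ofReal_sub, Complex.ofReal_one]
  simp only [ofReal_weight, RCLike.re_to_complex, Complex.ofReal_re]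

theorem rpow_add_natCast_sub_one_mul {x y : ℝ} (hx : x ≠ 0) (hy : y ≠ 0) (a b : ℝ) (n : ℕ) :
    x ^ (a + n - 1) * y ^ (b + n - 1) = x ^ (a - 1) * y ^ (b - 1) * (x * y) ^ n := by
  rw [add_sub_right_comm, add_sub_right_comm, rpow_add_natCast hx, rpow_add_natCast hy, mul_pow,
    mul_mul_mul_comm]

theorem betaFn_add_natCast (α β : ℝ) (n : ℕ) :
    betaFn (α + n) (β + n) =
      ∫ t in (0 : ℝ)..1, t ^ (α - 1) * (1 - t) ^ (β - 1) * (t * (1 - t)) ^ n := by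
  -- At `t = 1` the integrands can differ: `0 ^ (β + n - 1)` need not be `0 ^ (β - 1) * 0 ^ n`.
  simp only [betaFn, intervalIntegral.integral_of_le zero_le_one, integral_Ioc_eq_integral_Ioo]
  exact setIntegral_congr_fun measurableSet_Ioo fun t ht ↦
    rpow_add_natCast_sub_one_mul ht.1.ne' (sub_pos.2 ht.2).ne' α β n

theorem mecbf_series_expansion (α β m : ℝ) (hα : 0 < α) (hβ : 0 < β) :
    Summable (fun n : ℕ => m ^ n / (n.factorial : ℝ) * betaFn (α + n) (β + n)) ∧
      mecbf α β m = ∑' n : ℕ, m ^ n / (n.factorial : ℝ) * betaFn (α + n) (β + n) := by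
  suffices h : HasSum (fun n : ℕ ↦ m ^ n / (n.factorial : ℝ) * betaFn (α + n) (β + n))
      (mecbf α β m) from ⟨h.summable, h.tsum_eq.symm⟩
  have weight_integrable := (intervalIntegrable_rpow_mul_one_sub_rpow hα hβ).1
  have norm_le_one : ∀ᵐ t ∂volume.restrict (Set.Ioc (0 : ℝ) 1), ‖t * (1 - t)‖ ≤ 1 := by
    refine ae_restrict_of_forall_mem measurableSet_Ioc fun t ⟨ht0, ht1⟩ ↦ ?_
    rw [norm_eq_abs, abs_le]
    constructor <;> nlinarith
  simp only [betaFn_add_natCast, mecbf, intervalIntegral.integral_of_le zero_le_one,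
    mul_assoc m, exp_eq_exp_ℝ]
  exact hasSum_pow_div_factorial_mul_integral_mul_pow m weight_integrable (by fun_prop) norm_le_one
end

section
/- For all real numbers α, β, s with 0 < s, s < α and s < β, the Mellin-type transform of the modified extension of the classical beta function with negated parameter satisfies ∫₀^∞ m^(s-1) · B(α, β; -m) dm = Γ(s) · B(α - s, β - s), where B(x,y) denotes the classical Euler beta function and Γ is the gamma function. -/
/-!
The function `m ↦ B(α, β; -m)` is a superposition of the exponentials `exp (-m φ(t))` with rate
`φ(t) = t (1 - t)`, and the Mellin transform of `exp (-m r)` is `Γ(s) r ^ (-s)`. Since the Gamma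
integrand is nonnegative, the absolute double integral is `Γ(s)` times the integral of
`φ ^ (-s)` against the absolute weight, so Tonelli's criterion justifies exchanging the two
integrals as soon as the latter is finite. For the beta weight, the factor `φ(t) ^ (-s)` lowers
both exponents by `s`, which leaves the integrand of `B(α - s, β - s)`.
-/

open MeasureTheory Real

theorem integrableOn_rpow_mul_exp_neg_mul_Ioi {s r : ℝ} (hs : 0 < s) (hr : 0 < r) :
    IntegrableOn (fun m : ℝ => m ^ (s - 1) * exp (-(r * m))) (Set.Ioi 0) := by
  simpa only [rpow_one, neg_mul] using
    integrableOn_rpow_mul_exp_neg_mul_rpow (by linarith : -1 < s - 1) one_pos hr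

theorem integral_rpow_mul_exp_neg_mul_Ioi_eq_Gamma_mul_rpow_neg {s r : ℝ}
    (hs : 0 < s) (hr : 0 < r) :
    ∫ m in Set.Ioi (0 : ℝ), m ^ (s - 1) * exp (-(r * m)) = Gamma s * r ^ (-s) := by
  rw [Real.integral_rpow_mul_exp_neg_mul_Ioi hs hr, one_div, inv_rpow hr.le, rpow_neg hr.le,
    mul_comm]

section LaplaceSuperposition

variable {X E : Type*} [MeasurableSpace X] {μ : Measure X} [NormedAddCommGroup E]
  [NormedSpace ℝ E] {s : ℝ} {φ : X → ℝ} {f : X → E}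

theorem integral_norm_rpow_mul_exp_neg_mul_smul {r : ℝ} (hs : 0 < s) (hr : 0 < r) (v : E) :
    ∫ m in Set.Ioi (0 : ℝ), ‖(m ^ (s - 1) * exp (-(r * m))) • v‖ =
      Gamma s * ‖r ^ (-s) • v‖ := by
  calc ∫ m in Set.Ioi (0 : ℝ), ‖(m ^ (s - 1) * exp (-(r * m))) • v‖
      = ∫ m in Set.Ioi (0 : ℝ), m ^ (s - 1) * exp (-(r * m)) * ‖v‖ := by
        refine setIntegral_congr_fun measurableSet_Ioi fun m (hm : 0 < m) => ?_
        exact norm_smul_of_nonneg (by positivity) v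
    _ = Gamma s * ‖r ^ (-s) • v‖ := by
        rw [integral_mul_const, integral_rpow_mul_exp_neg_mul_Ioi_eq_Gamma_mul_rpow_neg hs hr,
          norm_smul_of_nonneg (rpow_nonneg hr.le _), mul_assoc]

variable [SFinite μ]

theorem integrable_rpow_mul_exp_neg_mul_smul_prod (hs : 0 < s) (hφ : AEMeasurable φ μ)
    (hφ_pos : ∀ᵐ x ∂μ, 0 < φ x) (hf : AEStronglyMeasurable f μ)
    (hint : Integrable (fun x => φ x ^ (-s) • f x) μ) :
    Integrable (Function.uncurry fun m x => (m ^ (s - 1) * exp (-(φ x * m))) • f x)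
      ((volume.restrict (Set.Ioi (0 : ℝ))).prod μ) := by
  have hmeas : AEStronglyMeasurable
      (Function.uncurry fun m x => (m ^ (s - 1) * exp (-(φ x * m))) • f x)
      ((volume.restrict (Set.Ioi (0 : ℝ))).prod μ) := by
    refine AEStronglyMeasurable.smul (AEMeasurable.aestronglyMeasurable ?_) hf.comp_snd
    fun_prop
  refine (integrable_prod_iff' hmeas).2 ⟨?_, ?_⟩
  · filter_upwards [hφ_pos] with x hx
    exact (integrableOn_rpow_mul_exp_neg_mul_Ioi hs hx).smul_const (f x)
  · refine (hint.norm.const_mul (Gamma s)).congr ?_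
    filter_upwards [hφ_pos] with x hx
    exact (integral_norm_rpow_mul_exp_neg_mul_smul hs hx (f x)).symm

theorem integral_rpow_smul_integral_exp_neg_mul_smul [CompleteSpace E] (hs : 0 < s)
    (hφ : AEMeasurable φ μ) (hφ_pos : ∀ᵐ x ∂μ, 0 < φ x) (hf : AEStronglyMeasurable f μ)
    (hint : Integrable (fun x => φ x ^ (-s) • f x) μ) :
    ∫ m in Set.Ioi (0 : ℝ), m ^ (s - 1) • ∫ x, exp (-(φ x * m)) • f x ∂μ =
      Gamma s • ∫ x, φ x ^ (-s) • f x ∂μ := by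
  calc ∫ m in Set.Ioi (0 : ℝ), m ^ (s - 1) • ∫ x, exp (-(φ x * m)) • f x ∂μ
      = ∫ m in Set.Ioi (0 : ℝ), ∫ x, (m ^ (s - 1) * exp (-(φ x * m))) • f x ∂μ := by
        simp only [mul_smul, integral_smul]
    _ = ∫ x, (∫ m in Set.Ioi (0 : ℝ), (m ^ (s - 1) * exp (-(φ x * m))) • f x) ∂μ :=
        integral_integral_swap (integrable_rpow_mul_exp_neg_mul_smul_prod hs hφ hφ_pos hf hint)
    _ = ∫ x, Gamma s • φ x ^ (-s) • f x ∂μ := by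
        refine integral_congr_ae ?_
        filter_upwards [hφ_pos] with x hx
        rw [integral_smul_const, integral_rpow_mul_exp_neg_mul_Ioi_eq_Gamma_mul_rpow_neg hs hx,
          mul_smul]
    _ = Gamma s • ∫ x, φ x ^ (-s) • f x ∂μ := integral_smul _ _

end LaplaceSuperposition

theorem integrableOn_rpow_mul_one_sub_rpow {x y : ℝ} (hx : 0 < x) (hy : 0 < y) :
    IntegrableOn (fun t : ℝ => t ^ (x - 1) * (1 - t) ^ (y - 1)) (Set.Ioo 0 1) := by
  have hcomplex := Complex.betaIntegral_convergent (u := x) (v := y) (by simpa) (by simpa)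
  rw [intervalIntegrable_iff_integrableOn_Ioo_of_le zero_le_one] at hcomplex
  refine IntegrableOn.congr_fun hcomplex.norm (fun t ht => ?_) measurableSet_Ioo
  have h_one_sub : 1 - (t : ℂ) = ((1 - t : ℝ) : ℂ) := by push_cast; rfl
  rw [norm_mul, h_one_sub, Complex.norm_cpow_eq_rpow_re_of_pos ht.1,
    Complex.norm_cpow_eq_rpow_re_of_pos (sub_pos.2 ht.2)]
  simp only [Complex.sub_re, Complex.ofReal_re, Complex.one_re]

theorem mul_rpow_mul_rpow_mul_rpow {x y : ℝ} (hx : 0 < x) (hy : 0 < y) (a b c : ℝ) :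
    (x * y) ^ c * (x ^ a * y ^ b) = x ^ (c + a) * y ^ (c + b) := by
  rw [mul_rpow hx.le hy.le, mul_mul_mul_comm, ← rpow_add hx, ← rpow_add hy]

theorem betaFn_eq_setIntegral_Ioo (x y : ℝ) :
    betaFn x y = ∫ t in Set.Ioo (0 : ℝ) 1, t ^ (x - 1) * (1 - t) ^ (y - 1) := by
  rw [betaFn, intervalIntegral.integral_of_le zero_le_one, integral_Ioc_eq_integral_Ioo]

theorem mecbf_eq_setIntegral_Ioo (α β m : ℝ) :
    mecbf α β m = ∫ t in Set.Ioo (0 : ℝ) 1,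
      exp (t * (1 - t) * m) * (t ^ (α - 1) * (1 - t) ^ (β - 1)) := by
  rw [mecbf, intervalIntegral.integral_of_le zero_le_one, integral_Ioc_eq_integral_Ioo]
  refine setIntegral_congr_fun measurableSet_Ioo fun t _ => ?_
  ring_nf

theorem mecbf_mellin (α β s : ℝ) (hs : 0 < s) (hsα : s < α) (hsβ : s < β) :
    ∫ m in Set.Ioi (0 : ℝ), m ^ (s - 1) * mecbf α β (-m) =
      Real.Gamma s * betaFn (α - s) (β - s) := by
  have hweight : Set.EqOn
      (fun t : ℝ => (t * (1 - t)) ^ (-s) * (t ^ (α - 1) * (1 - t) ^ (β - 1)))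
      (fun t => t ^ (α - s - 1) * (1 - t) ^ (β - s - 1)) (Set.Ioo 0 1) := by
    intro t ht
    dsimp only
    rw [mul_rpow_mul_rpow_mul_rpow ht.1 (sub_pos.2 ht.2)]
    ring_nf
  have hint : IntegrableOn
      (fun t : ℝ => (t * (1 - t)) ^ (-s) * (t ^ (α - 1) * (1 - t) ^ (β - 1))) (Set.Ioo 0 1) :=
    (integrableOn_rpow_mul_one_sub_rpow (sub_pos.2 hsα) (sub_pos.2 hsβ)).congr_fun
      hweight.symm measurableSet_Ioo
  have hrate_pos : ∀ᵐ t : ℝ ∂volume.restrict (Set.Ioo 0 1), 0 < t * (1 - t) :=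
    ae_restrict_of_forall_mem measurableSet_Ioo fun t ht => mul_pos ht.1 (sub_pos.2 ht.2)
  simp_rw [mecbf_eq_setIntegral_Ioo, mul_neg, betaFn_eq_setIntegral_Ioo]
  rw [← setIntegral_congr_fun measurableSet_Ioo hweight]
  exact integral_rpow_smul_integral_exp_neg_mul_smul hs (by fun_prop) hrate_pos
    (by fun_prop) hint
end

section
/- For all real numbers α > 0, β > 0 and every natural number n, the function m ↦ B(α, β; m) is n times differentiable on ℝ and its n-th derivative satisfies (d^n/dm^n) B(α, β; m) = B(α + n, β + n; m) for every real m. -/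
/-!
Up to the constant `beta α β`, the function `m ↦ B(α, β; m)` is the moment-generating function of
`X = t * (1 - t)` under the beta distribution with parameters `α`, `β`. As `X` is bounded, its
moment-generating function is analytic on `ℝ`, with `n`-th derivative `𝔼[X ^ n * exp (m * X)]`; the
factor `X ^ n = t ^ n * (1 - t) ^ n` is absorbed into the beta density, raising both parameters
by `n`.
-/

open MeasureTheory Real

open ProbabilityTheory Set

lemma integrableExpSet_eq_univ_of_mem_Icc {Ω : Type*} {_ : MeasurableSpace Ω} {μ : Measure Ω}
    [IsFiniteMeasure μ] {X : Ω → ℝ} {a b : ℝ} (hX : AEMeasurable X μ)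
    (hab : ∀ᵐ ω ∂μ, X ω ∈ Icc a b) : integrableExpSet X μ = univ :=
  eq_univ_of_forall fun _ ↦ integrable_exp_mul_of_mem_Icc hX hab

lemma betaPDF_eq_indicator (α β : ℝ) :
    betaPDF α β = (Ioo 0 1).indicator fun t ↦
      ENNReal.ofReal ((1 / beta α β) * t ^ (α - 1) * (1 - t) ^ (β - 1)) := by
  ext t
  by_cases ht : 0 < t ∧ t < 1 <;> simp [betaPDF_eq, indicator, ht]

lemma betaMeasure_eq_withDensity_restrict (α β : ℝ) :
    betaMeasure α β = (volume.restrict (Ioo 0 1)).withDensity fun t ↦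
      ENNReal.ofReal ((1 / beta α β) * t ^ (α - 1) * (1 - t) ^ (β - 1)) := by
  rw [betaMeasure, betaPDF_eq_indicator, withDensity_indicator measurableSet_Ioo]

lemma ae_betaMeasure_mem_Ioo (α β : ℝ) : ∀ᵐ t ∂betaMeasure α β, t ∈ Ioo (0 : ℝ) 1 := by
  rw [betaMeasure_eq_withDensity_restrict]
  exact (withDensity_absolutelyContinuous _ _).ae_le (ae_restrict_mem measurableSet_Ioo)

lemma integral_betaMeasure {E : Type*} [NormedAddCommGroup E] [NormedSpace ℝ E]
    {α β : ℝ} (hα : 0 < α) (hβ : 0 < β) (f : ℝ → E) :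
    ∫ t, f t ∂betaMeasure α β =
      (beta α β)⁻¹ • ∫ t in Ioo 0 1, (t ^ (α - 1) * (1 - t) ^ (β - 1)) • f t := by
  rw [betaMeasure_eq_withDensity_restrict, integral_withDensity_eq_integral_toReal_smul
    (by fun_prop) (Filter.Eventually.of_forall fun _ ↦ ENNReal.ofReal_lt_top), ← integral_smul]
  refine setIntegral_congr_fun measurableSet_Ioo fun t ⟨ht₀, ht₁⟩ ↦ ?_
  have : 0 < beta α β := beta_pos hα hβ
  have : 0 < 1 - t := sub_pos.2 ht₁
  rw [ENNReal.toReal_ofReal (by positivity), smul_smul, one_div, mul_assoc]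

lemma mecbf_add_natCast {α β : ℝ} (hα : 0 < α) (hβ : 0 < β) (j k : ℕ) (m : ℝ) :
    mecbf (α + j) (β + k) m =
      beta α β * ∫ t, t ^ j * (1 - t) ^ k * exp (m * (t * (1 - t))) ∂betaMeasure α β := by
  rw [integral_betaMeasure hα hβ, smul_eq_mul, mul_inv_cancel_left₀ (beta_pos hα hβ).ne', mecbf,
    intervalIntegral.integral_of_le zero_le_one, integral_Ioc_eq_integral_Ioo]
  refine setIntegral_congr_fun measurableSet_Ioo fun t ⟨ht₀, ht₁⟩ ↦ ?_
  have hshift : t ^ (α + j - 1) = t ^ (α - 1) * t ^ j := by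
    rw [add_sub_right_comm, rpow_add_natCast ht₀.ne']
  have hshift_one_sub : (1 - t) ^ (β + k - 1) = (1 - t) ^ (β - 1) * (1 - t) ^ k := by
    rw [add_sub_right_comm, rpow_add_natCast (sub_pos.2 ht₁).ne']
  simp only [hshift, hshift_one_sub, smul_eq_mul]
  ring_nf

lemma mecbf_eq_beta_mul_mgf {α β : ℝ} (hα : 0 < α) (hβ : 0 < β) :
    mecbf α β = fun m ↦ beta α β * mgf (fun t ↦ t * (1 - t)) (betaMeasure α β) m := by
  ext m
  simpa [mgf] using mecbf_add_natCast hα hβ 0 0 m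

lemma integrableExpSet_mul_one_sub_betaMeasure {α β : ℝ} (hα : 0 < α) (hβ : 0 < β) :
    integrableExpSet (fun t ↦ t * (1 - t)) (betaMeasure α β) = univ := by
  have := isProbabilityMeasureBeta hα hβ
  refine integrableExpSet_eq_univ_of_mem_Icc (a := 0) (b := 1) (by fun_prop) ?_
  filter_upwards [ae_betaMeasure_mem_Ioo α β] with t ⟨ht₀, ht₁⟩
  exact ⟨mul_nonneg ht₀.le (sub_nonneg.2 ht₁.le), by nlinarith⟩

lemma analyticOnNhd_mecbf {α β : ℝ} (hα : 0 < α) (hβ : 0 < β) :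
    AnalyticOnNhd ℝ (mecbf α β) univ := by
  rw [mecbf_eq_beta_mul_mgf hα hβ]
  refine analyticOnNhd_const.mul fun m _ ↦ analyticAt_mgf ?_
  simp [integrableExpSet_mul_one_sub_betaMeasure hα hβ]

lemma iteratedDeriv_mecbf {α β : ℝ} (hα : 0 < α) (hβ : 0 < β) (n : ℕ) (m : ℝ) :
    iteratedDeriv n (mecbf α β) m = mecbf (α + n) (β + n) m := by
  have hm : m ∈ interior (integrableExpSet (fun t ↦ t * (1 - t)) (betaMeasure α β)) := by
    simp [integrableExpSet_mul_one_sub_betaMeasure hα hβ]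
  rw [mecbf_eq_beta_mul_mgf hα hβ, iteratedDeriv_const_mul_field, iteratedDeriv_mgf hm,
    mecbf_add_natCast hα hβ]
  simp only [mul_pow]

theorem mecbf_iteratedDeriv (α β : ℝ) (hα : 0 < α) (hβ : 0 < β) (n : ℕ) :
    ContDiff ℝ n (fun m : ℝ => mecbf α β m) ∧
      ∀ m : ℝ, iteratedDeriv n (fun m : ℝ => mecbf α β m) m = mecbf (α + n) (β + n) m :=
  ⟨(analyticOnNhd_mecbf hα hβ).contDiff, iteratedDeriv_mecbf hα hβ n⟩
end

section
/- For all real numbers α > 0, β > 0 and every real number m, the modified extension of the classical beta function has the trigonometric integral representation B(α, β; m) = 2 · ∫₀^(π/2) (cos θ)^(2α-1) · (sin θ)^(2β-1) · exp(m · cos²θ · sin²θ) dθ. -/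
/-!
Substitute `t = cos² θ`, so that `1 - t = sin² θ` and `dt = -2 cos θ sin θ dθ`. The factor
`cos θ sin θ` turns the exponents `2 (α - 1)` and `2 (β - 1)` into `2 α - 1` and `2 β - 1`. The
substitution is antitone, so the two integrals converge or diverge together, and the endpoints,
where `cos θ` or `sin θ` vanishes, form a null set.
-/

open MeasureTheory Real

theorem rpow_two_mul_sub_one {x : ℝ} (hx : 0 < x) (a : ℝ) :
    x ^ (2 * a - 1) = x * (x ^ 2) ^ (a - 1) :=
  calc x ^ (2 * a - 1) = x ^ (1 + (2 : ℕ) * (a - 1)) := by congr 1; push_cast; ring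
    _ = x * (x ^ 2) ^ (a - 1) := by rw [rpow_add hx, rpow_one, rpow_natCast_mul hx.le]

section CosSqSubstitution

variable {E : Type*} [NormedAddCommGroup E] [NormedSpace ℝ E]

theorem integral_zero_one_eq_integral_comp_cos_sq (f : ℝ → E) :
    ∫ t in (0 : ℝ)..1, f t =
      (2 : ℝ) • ∫ θ in (0 : ℝ)..(π / 2), (cos θ * sin θ) • f (cos θ ^ 2) := by
  have hderiv (θ : ℝ) : HasDerivAt (fun θ ↦ cos θ ^ 2) (-2 * (cos θ * sin θ)) θ :=
    ((hasDerivAt_cos θ).pow 2).congr_deriv (by ring)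
  have hnonpos : ∀ θ ∈ Set.Ioo (min 0 (π / 2)) (max 0 (π / 2)), -2 * (cos θ * sin θ) ≤ 0 := by
    rw [min_eq_left pi_div_two_pos.le, max_eq_right pi_div_two_pos.le]
    rintro θ ⟨hθ₀, hθ₁⟩
    have hcos : 0 ≤ cos θ := cos_nonneg_of_neg_pi_div_two_le_of_le (by linarith) hθ₁.le
    have hsin : 0 ≤ sin θ := sin_nonneg_of_nonneg_of_le_pi hθ₀.le (by linarith)
    linarith [mul_nonneg hcos hsin]
  have hsubst := intervalIntegral.integral_deriv_smul_comp_of_deriv_nonpos (g := f)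
    (HasDerivAt.continuousOn fun θ _ ↦ hderiv θ) (fun θ _ ↦ hderiv θ) hnonpos
  calc ∫ t in (0 : ℝ)..1, f t = -∫ t in (cos 0 ^ 2)..(cos (π / 2) ^ 2), f t := by
        rw [← intervalIntegral.integral_symm]; simp
    _ = -∫ θ in (0 : ℝ)..(π / 2), (-2 * (cos θ * sin θ)) • f (cos θ ^ 2) :=
        congrArg Neg.neg hsubst.symm
    _ = (2 : ℝ) • ∫ θ in (0 : ℝ)..(π / 2), (cos θ * sin θ) • f (cos θ ^ 2) := by
        simp only [mul_smul (-2 : ℝ)]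
        rw [intervalIntegral.integral_smul, neg_smul, neg_neg]

theorem integral_rpow_mul_one_sub_rpow_smul (a b : ℝ) (f : ℝ → E) :
    ∫ t in (0 : ℝ)..1, (t ^ (a - 1) * (1 - t) ^ (b - 1)) • f t =
      (2 : ℝ) • ∫ θ in (0 : ℝ)..(π / 2),
        (cos θ ^ (2 * a - 1) * sin θ ^ (2 * b - 1)) • f (cos θ ^ 2) := by
  rw [integral_zero_one_eq_integral_comp_cos_sq]
  congr 1
  refine intervalIntegral.integral_congr_Ioo_of_le pi_div_two_pos.le ?_
  rintro θ ⟨hθ₀, hθ₁⟩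
  have hcos : 0 < cos θ := cos_pos_of_mem_Ioo ⟨by linarith, hθ₁⟩
  have hsin : 0 < sin θ := sin_pos_of_pos_of_lt_pi hθ₀ (by linarith)
  simp only [smul_smul, rpow_two_mul_sub_one hcos, rpow_two_mul_sub_one hsin, sin_sq]
  congr 1
  ring

end CosSqSubstitution

theorem mecbf_trig_repr (α β m : ℝ) (hα : 0 < α) (hβ : 0 < β) :
    mecbf α β m =
      2 * ∫ θ in (0:ℝ)..(Real.pi / 2),
        Real.cos θ ^ (2 * α - 1) * Real.sin θ ^ (2 * β - 1) *
          Real.exp (m * Real.cos θ ^ 2 * Real.sin θ ^ 2) := by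
  simpa only [mecbf, smul_eq_mul, sin_sq] using
    integral_rpow_mul_one_sub_rpow_smul α β fun t ↦ exp (m * t * (1 - t))
end

section
/- For all real numbers α > 0, β > 0 and every real number m, the modified extension of the classical beta function has the integral representation B(α, β; m) = ∫₀^∞ u^(α-1) / (1+u)^(α+β) · exp(m·u / (1+u)²) du. -/
open MeasureTheory Real

/-!
The substitution `t = u / (1 + u)` maps `(0, ∞)` bijectively onto `(0, 1)`, with
`dt = du / (1 + u) ^ 2` and `1 - t = 1 / (1 + u)`. The powers of `1 + u` coming from
`t ^ (α - 1)`, `(1 - t) ^ (β - 1)` and `dt` collect to `(1 + u) ^ (-(α + β))`, while the exponent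
`m t (1 - t)` becomes `m u / (1 + u) ^ 2`.
-/

theorem one_sub_div_one_add {K : Type*} [DivisionRing K] {u : K} (hu : 1 + u ≠ 0) :
    1 - u / (1 + u) = (1 + u)⁻¹ := by
  rw [one_sub_div hu, add_sub_cancel_right, one_div]

theorem hasDerivAt_div_one_add {𝕜 : Type*} [NontriviallyNormedField 𝕜] {u : 𝕜}
    (hu : 1 + u ≠ 0) : HasDerivAt (fun u : 𝕜 => u / (1 + u)) ((1 + u) ^ 2)⁻¹ u := by
  have h := (hasDerivAt_id' u).fun_div ((hasDerivAt_id' u).const_add 1) hu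
  exact h.congr_deriv (by ring)

theorem bijOn_div_one_add {K : Type*} [Field K] [LinearOrder K] [IsStrictOrderedRing K] :
    Set.BijOn (fun u : K => u / (1 + u)) (Set.Ioi 0) (Set.Ioo 0 1) := by
  have left_inv : Set.LeftInvOn (fun t : K => t / (1 - t)) (fun u => u / (1 + u)) (Set.Ioi 0) := by
    intro u (hu : 0 < u)
    have hu' : 1 + u ≠ 0 := by positivity
    simp only [one_sub_div_one_add hu', div_inv_eq_mul, div_mul_cancel₀ u hu']
  have right_inv : Set.RightInvOn (fun t : K => t / (1 - t)) (fun u => u / (1 + u))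
      (Set.Ioo 0 1) := by
    intro t ⟨_, ht⟩
    have ht' : 1 - t ≠ 0 := (sub_pos.2 ht).ne'
    have one_add : 1 + t / (1 - t) = (1 - t)⁻¹ := by
      rw [one_add_div ht', sub_add_cancel, one_div]
    simp only [one_add, div_inv_eq_mul, div_mul_cancel₀ t ht']
  refine Set.InvOn.bijOn ⟨left_inv, right_inv⟩ ?_ fun t ht => div_pos ht.1 (sub_pos.2 ht.2)
  intro u (hu : 0 < u)
  exact ⟨by positivity, (div_lt_one (by positivity)).2 (lt_one_add u)⟩

theorem inv_one_add_sq_mul_rpow_mul_rpow (a b : ℝ) {u : ℝ} (hu : 0 < u) :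
    ((1 + u) ^ 2)⁻¹ * ((u / (1 + u)) ^ (a - 1) * (1 - u / (1 + u)) ^ (b - 1)) =
      u ^ (a - 1) / (1 + u) ^ (a + b) := by
  have hu' : 0 < 1 + u := by positivity
  have collect_powers :
      (1 + u) ^ (a + b) = (1 + u) ^ 2 * (1 + u) ^ (a - 1) * (1 + u) ^ (b - 1) := by
    rw [← rpow_two, ← rpow_add hu', ← rpow_add hu']
    ring_nf
  rw [one_sub_div_one_add hu'.ne', div_rpow hu.le hu'.le, inv_rpow hu'.le, collect_powers]
  field_simp

section

variable {E : Type*} [NormedAddCommGroup E] [NormedSpace ℝ E]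

theorem intervalIntegral_zero_one_eq_integral_Ioi_div_one_add (f : ℝ → E) :
    ∫ t in (0 : ℝ)..1, f t = ∫ u in Set.Ioi 0, ((1 + u) ^ 2)⁻¹ • f (u / (1 + u)) := by
  have hderiv : ∀ u ∈ Set.Ioi (0 : ℝ), HasDerivWithinAt (fun u : ℝ => u / (1 + u))
      ((1 + u) ^ 2)⁻¹ (Set.Ioi 0) u := fun u (hu : 0 < u) =>
    (hasDerivAt_div_one_add (by positivity)).hasDerivWithinAt
  rw [intervalIntegral.integral_of_le zero_le_one, integral_Ioc_eq_integral_Ioo,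
    ← bijOn_div_one_add.image_eq,
    integral_image_eq_integral_abs_deriv_smul measurableSet_Ioi hderiv bijOn_div_one_add.injOn]
  simp only [abs_inv, abs_sq]

theorem intervalIntegral_rpow_mul_rpow_smul_eq_integral_Ioi (a b : ℝ) (f : ℝ → E) :
    ∫ t in (0 : ℝ)..1, (t ^ (a - 1) * (1 - t) ^ (b - 1)) • f t =
      ∫ u in Set.Ioi 0, (u ^ (a - 1) / (1 + u) ^ (a + b)) • f (u / (1 + u)) := by
  rw [intervalIntegral_zero_one_eq_integral_Ioi_div_one_add]
  refine setIntegral_congr_fun measurableSet_Ioi fun u hu => ?_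
  simp only [smul_smul, inv_one_add_sq_mul_rpow_mul_rpow a b hu]

end

theorem mecbf_infinite_repr (α β m : ℝ) (hα : 0 < α) (hβ : 0 < β) :
    mecbf α β m =
      ∫ u in Set.Ioi (0 : ℝ),
        u ^ (α - 1) / (1 + u) ^ (α + β) * Real.exp (m * u / (1 + u) ^ 2) := by
  have exponent_eq : ∀ u ∈ Set.Ioi (0 : ℝ),
      m * (u / (1 + u)) * (1 - u / (1 + u)) = m * u / (1 + u) ^ 2 := by
    intro u (hu : 0 < u)
    rw [one_sub_div_one_add (by positivity)]
    field_simp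
  calc mecbf α β m
    _ = ∫ u in Set.Ioi (0 : ℝ), u ^ (α - 1) / (1 + u) ^ (α + β) *
          Real.exp (m * (u / (1 + u)) * (1 - u / (1 + u))) :=
      intervalIntegral_rpow_mul_rpow_smul_eq_integral_Ioi α β fun t => Real.exp (m * t * (1 - t))
    _ = ∫ u in Set.Ioi (0 : ℝ),
          u ^ (α - 1) / (1 + u) ^ (α + β) * Real.exp (m * u / (1 + u) ^ 2) :=
      setIntegral_congr_fun measurableSet_Ioi fun u hu => by simp only [exponent_eq u hu]
end

section
/- For all real numbers α > 0, β > 0 and every real number m, the modified extension of the classical beta function has the integral representation B(α, β; m) = 2^(1-α-β) · ∫_{-1}^{1} (1+t)^(α-1) · (1-t)^(β-1) · exp(m·(1-t²)/4) dt. -/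
/-!
The affine map `t ↦ c + (d - c) * t` carries `[0, 1]` onto `[c, d]`, and the distances to the two
endpoints scale by `d - c`. So each weight exponent contributes a power of `d - c`, and the
Jacobian contributes one more. On `[-1, 1]` the exponential factor matches because
`1 - (-1 + 2 * t) ^ 2 = 4 * t * (1 - t)`.
-/

open MeasureTheory Real

theorem mul_rpow_mul_mul_rpow {l x y : ℝ} (hl : 0 < l) (hx : 0 ≤ x) (hy : 0 ≤ y) (p q : ℝ) :
    (l * x) ^ p * (l * y) ^ q = l ^ (p + q) * (x ^ p * y ^ q) := by
  rw [mul_rpow hl.le hx, mul_rpow hl.le hy, rpow_add hl, mul_mul_mul_comm]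

theorem integral_sub_rpow_mul_sub_rpow_smul {E : Type*} [NormedAddCommGroup E]
    [NormedSpace ℝ E] {c d : ℝ} (hcd : c < d) (p q : ℝ) (f : ℝ → E) :
    ∫ x in c..d, ((x - c) ^ p * (d - x) ^ q) • f x =
      (d - c) ^ (p + q + 1) •
        ∫ t in (0 : ℝ)..1, (t ^ p * (1 - t) ^ q) • f (c + (d - c) * t) := by
  have hl : 0 < d - c := sub_pos.mpr hcd
  have hweight : ∀ t ∈ Set.uIcc (0 : ℝ) 1,
      (c + (d - c) * t - c) ^ p * (d - (c + (d - c) * t)) ^ q =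
        (d - c) ^ (p + q) * (t ^ p * (1 - t) ^ q) := by
    intro t ht
    rw [Set.uIcc_of_le zero_le_one] at ht
    have hright : d - (c + (d - c) * t) = (d - c) * (1 - t) := by ring
    rw [add_sub_cancel_left, hright, mul_rpow_mul_mul_rpow hl ht.1 (sub_nonneg.mpr ht.2)]
  calc
    ∫ x in c..d, ((x - c) ^ p * (d - x) ^ q) • f x
    _ = (d - c) • ∫ t in (0 : ℝ)..1, ((c + (d - c) * t - c) ^ p *
          (d - (c + (d - c) * t)) ^ q) • f (c + (d - c) * t) := by
      rw [intervalIntegral.smul_integral_comp_add_mul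
        (fun x ↦ ((x - c) ^ p * (d - x) ^ q) • f x), mul_zero, add_zero, mul_one, add_sub_cancel]
    _ = (d - c) • ∫ t in (0 : ℝ)..1,
          (d - c) ^ (p + q) • (t ^ p * (1 - t) ^ q) • f (c + (d - c) * t) := by
      congr 1
      refine intervalIntegral.integral_congr fun t ht ↦ ?_
      simp only [hweight t ht, mul_smul]
    _ = (d - c) ^ (p + q + 1) •
          ∫ t in (0 : ℝ)..1, (t ^ p * (1 - t) ^ q) • f (c + (d - c) * t) := by
      rw [intervalIntegral.integral_smul, smul_smul, rpow_add_one hl.ne', mul_comm]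

theorem mecbf_symm_interval_repr (α β m : ℝ) (hα : 0 < α) (hβ : 0 < β) :
    mecbf α β m =
      (2 : ℝ) ^ (1 - α - β) *
        ∫ t in (-1 : ℝ)..1,
          (1 + t) ^ (α - 1) * (1 - t) ^ (β - 1) * Real.exp (m * (1 - t ^ 2) / 4) := by
  have hdist : ∀ x : ℝ, x - -1 = 1 + x := fun x ↦ by ring
  have hlength : (1 : ℝ) - -1 = 2 := by norm_num
  have hpower : α - 1 + (β - 1) + 1 = -(1 - α - β) := by ring
  have hexponent : ∀ t : ℝ, m * (1 - (-1 + 2 * t) ^ 2) / 4 = m * t * (1 - t) := fun t ↦ by ring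
  have hintegral : ∫ x in (-1 : ℝ)..1,
      (1 + x) ^ (α - 1) * (1 - x) ^ (β - 1) * exp (m * (1 - x ^ 2) / 4) =
        2 ^ (-(1 - α - β)) * mecbf α β m := by
    have hsubst := integral_sub_rpow_mul_sub_rpow_smul (show (-1 : ℝ) < 1 by norm_num)
      (α - 1) (β - 1) (fun x ↦ exp (m * (1 - x ^ 2) / 4))
    rw [hlength, hpower] at hsubst
    simpa only [smul_eq_mul, hdist, hexponent, mecbf] using hsubst
  rw [hintegral, ← mul_assoc, ← rpow_add two_pos, add_neg_cancel, rpow_zero, one_mul]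
end

section
/- For all real numbers α > 0, β > 0 and every real number m, the modified extension of the classical beta function has the integral representation B(α, β; m) = 2^(1-α-β) · ∫_{-∞}^{∞} exp((α-β)·x + m / (4·cosh²x)) / (cosh x)^(α+β) dx. -/
/-!
Substitute the logistic function, `t = σ(y) = 1 / (1 + e^(-y))`, for which `1 - t = σ(-y)` and
`dt = σ(y) σ(-y) dy`: the Jacobian absorbs the `-1` in both exponents of the beta integrand. At
`y = 2 x` the two factors are `σ(±2 x) = e^(±x) / (2 cosh x)`, and their product is
`1 / (4 cosh² x)`.
-/

open MeasureTheory Real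

theorem integral_Ioo_zero_one_eq_integral_sigmoid {E : Type*} [NormedAddCommGroup E]
    [NormedSpace ℝ E] (f : ℝ → E) :
    ∫ t in Set.Ioo 0 1, f t = ∫ y, (sigmoid y * sigmoid (-y)) • f (sigmoid y) := by
  have hderiv (y : ℝ) : HasDerivAt sigmoid (sigmoid y * sigmoid (-y)) y :=
    sigmoid_neg y ▸ hasDerivAt_sigmoid y
  rw [← range_sigmoid, ← Set.image_univ, integral_image_eq_integral_deriv_smul_of_monotoneOn
    .univ (fun y _ ↦ (hderiv y).hasDerivWithinAt) (sigmoid_monotone.monotoneOn _), setIntegral_univ]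

theorem mecbf_eq_integral_sigmoid (α β m : ℝ) :
    mecbf α β m =
      ∫ y, sigmoid y ^ α * sigmoid (-y) ^ β * exp (m * (sigmoid y * sigmoid (-y))) := by
  rw [mecbf, intervalIntegral.integral_of_le zero_le_one, integral_Ioc_eq_integral_Ioo,
    integral_Ioo_zero_one_eq_integral_sigmoid]
  congr with y
  rw [← sigmoid_neg, rpow_sub_one (sigmoid_pos y).ne', rpow_sub_one (sigmoid_pos (-y)).ne',
    smul_eq_mul, mul_assoc m]
  have hy := sigmoid_pos y
  have hy' := sigmoid_pos (-y)
  field_simp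

theorem sigmoid_two_mul (x : ℝ) : sigmoid (2 * x) = exp x / (2 * cosh x) := by
  have hexp : exp (-(2 * x)) = exp (-x) / exp x := by rw [← exp_sub]; ring_nf
  rw [sigmoid_def, hexp, cosh_eq]
  field_simp

theorem sigmoid_neg_two_mul (x : ℝ) : sigmoid (-(2 * x)) = exp (-x) / (2 * cosh x) := by
  rw [← mul_neg, sigmoid_two_mul, cosh_neg]

theorem sigmoid_two_mul_mul_sigmoid_neg (x : ℝ) :
    sigmoid (2 * x) * sigmoid (-(2 * x)) = 1 / (4 * cosh x ^ 2) := by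
  rw [sigmoid_two_mul, sigmoid_neg_two_mul, div_mul_div_comm, ← exp_add, add_neg_cancel, exp_zero]
  ring

theorem sigmoid_two_mul_rpow_mul_sigmoid_neg_rpow (a b x : ℝ) :
    sigmoid (2 * x) ^ a * sigmoid (-(2 * x)) ^ b =
      exp ((a - b) * x) / (2 * cosh x) ^ (a + b) := by
  have hcosh : 0 < 2 * cosh x := mul_pos two_pos (cosh_pos x)
  calc
    sigmoid (2 * x) ^ a * sigmoid (-(2 * x)) ^ b
      = (exp x ^ a * exp (-x) ^ b) / ((2 * cosh x) ^ a * (2 * cosh x) ^ b) := by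
        rw [sigmoid_two_mul, sigmoid_neg_two_mul, div_rpow (exp_nonneg _) hcosh.le,
          div_rpow (exp_nonneg _) hcosh.le, div_mul_div_comm]
    _ = exp ((a - b) * x) / (2 * cosh x) ^ (a + b) := by
        rw [← exp_mul, ← exp_mul, ← exp_add, ← rpow_add hcosh]
        ring_nf

theorem mecbf_cosh_repr (α β m : ℝ) (hα : 0 < α) (hβ : 0 < β) :
    mecbf α β m =
      (2 : ℝ) ^ (1 - α - β) *
        ∫ x : ℝ,
          Real.exp ((α - β) * x + m / (4 * Real.cosh x ^ 2)) / Real.cosh x ^ (α + β) := by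
  let g (y : ℝ) : ℝ := sigmoid y ^ α * sigmoid (-y) ^ β * exp (m * (sigmoid y * sigmoid (-y)))
  have hscale : ∫ y, g y = 2 * ∫ x, g (2 * x) := by
    simp [Measure.integral_comp_mul_left]
  have hg (x : ℝ) : 2 * g (2 * x) = 2 ^ (1 - α - β) *
      (exp ((α - β) * x + m / (4 * cosh x ^ 2)) / cosh x ^ (α + β)) := by
    simp only [g]
    rw [sigmoid_two_mul_rpow_mul_sigmoid_neg_rpow, sigmoid_two_mul_mul_sigmoid_neg, mul_one_div,
      mul_rpow zero_le_two (cosh_pos x).le, sub_sub, rpow_sub two_pos, rpow_one, exp_add]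
    ring
  calc
    mecbf α β m = 2 * ∫ x, g (2 * x) := (mecbf_eq_integral_sigmoid α β m).trans hscale
    _ = 2 ^ (1 - α - β) * ∫ x, exp ((α - β) * x + m / (4 * cosh x ^ 2)) / cosh x ^ (α + β) := by
      simp only [← integral_const_mul, hg]
end

section
/- For all real numbers α > 0, β > 0 and every real number m with |m| ≤ 2.0335, the modified extension of the classical beta function satisfies the inequality |B(α, β; m)| ≤ 1.6626 · B(α, β), where B(α, β) is the classical Euler beta function. -/
open MeasureTheory Real

/-!
Since `0 ≤ t * (1 - t) ≤ 1 / 4` on `[0, 1]`, the factor `exp (m * t * (1 - t))` is at most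
`exp (m⁺ / 4)` there. Integrating against the nonnegative, integrable beta density gives
`|mecbf α β m| ≤ exp (m⁺ / 4) * betaFn α β`, and `1.6626` is a rounding up of `exp (2.0335 / 4)`.
-/

theorem rpow_mul_one_sub_rpow_nonneg {t : ℝ} (ht : t ∈ Set.Icc (0 : ℝ) 1) (a b : ℝ) :
    0 ≤ t ^ a * (1 - t) ^ b :=
  mul_nonneg (rpow_nonneg ht.1 a) (rpow_nonneg (sub_nonneg.mpr ht.2) b)

theorem betaFn_nonneg (x y : ℝ) : 0 ≤ betaFn x y :=
  intervalIntegral.integral_nonneg zero_le_one fun _ ht ↦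
    rpow_mul_one_sub_rpow_nonneg ht (x - 1) (y - 1)

theorem intervalIntegrable_rpow_mul_one_sub_rpow_s14 {a b : ℝ} (ha : -1 < a) (hb : -1 < b) :
    IntervalIntegrable (fun t : ℝ ↦ t ^ a * (1 - t) ^ b) volume 0 1 := by
  have complex_integrable : IntervalIntegrable
      (fun t : ℝ ↦ (t : ℂ) ^ (a : ℂ) * (1 - (t : ℂ)) ^ (b : ℂ)) volume 0 1 := by
    simpa using Complex.betaIntegral_convergent (u := a + 1) (v := b + 1)
      (by simpa using neg_lt_iff_pos_add.mp ha) (by simpa using neg_lt_iff_pos_add.mp hb)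
  refine complex_integrable.norm.congr fun t ht ↦ ?_
  rw [Set.uIoc_of_le zero_le_one] at ht
  have ht' : t ∈ Set.Icc (0 : ℝ) 1 := Set.Ioc_subset_Icc_self ht
  have ofReal_density :
      (t : ℂ) ^ (a : ℂ) * (1 - (t : ℂ)) ^ (b : ℂ) = ((t ^ a * (1 - t) ^ b : ℝ) : ℂ) := by
    rw [Complex.ofReal_mul, Complex.ofReal_cpow ht'.1,
      Complex.ofReal_cpow (sub_nonneg.mpr ht'.2), Complex.ofReal_sub, Complex.ofReal_one]
  simp only [ofReal_density]
  exact Complex.norm_of_nonneg (rpow_mul_one_sub_rpow_nonneg ht' a b)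

theorem exp_mul_mul_one_sub_le {t : ℝ} (ht : t ∈ Set.Icc (0 : ℝ) 1) (m : ℝ) :
    exp (m * t * (1 - t)) ≤ exp (m⁺ / 4) := by
  have product_nonneg : 0 ≤ t * (1 - t) := mul_nonneg ht.1 (sub_nonneg.mpr ht.2)
  have product_le : t * (1 - t) ≤ 1 / 4 := by nlinarith [sq_nonneg (t - 1 / 2)]
  refine exp_le_exp.mpr ?_
  calc m * t * (1 - t) = m * (t * (1 - t)) := mul_assoc m t (1 - t)
    _ ≤ m⁺ * (t * (1 - t)) := mul_le_mul_of_nonneg_right (le_posPart m) product_nonneg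
    _ ≤ m⁺ * (1 / 4) := mul_le_mul_of_nonneg_left product_le (posPart_nonneg m)
    _ = m⁺ / 4 := mul_one_div m⁺ 4

theorem abs_mecbf_le {α β : ℝ} (hα : 0 < α) (hβ : 0 < β) (m : ℝ) :
    |mecbf α β m| ≤ exp (m⁺ / 4) * betaFn α β := by
  have density_integrable := intervalIntegrable_rpow_mul_one_sub_rpow_s14
    (a := α - 1) (b := β - 1) (by linarith) (by linarith)
  rw [mecbf, betaFn, ← intervalIntegral.integral_const_mul, ← norm_eq_abs]
  refine intervalIntegral.norm_integral_le_of_norm_le zero_le_one (ae_of_all _ fun t ht ↦ ?_)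
    (density_integrable.const_mul _)
  have ht' : t ∈ Set.Icc (0 : ℝ) 1 := Set.Ioc_subset_Icc_self ht
  have density_nonneg := rpow_mul_one_sub_rpow_nonneg ht' (α - 1) (β - 1)
  rw [norm_of_nonneg (mul_nonneg density_nonneg (exp_nonneg _)), mul_comm]
  exact mul_le_mul_of_nonneg_right (exp_mul_mul_one_sub_le ht' m) density_nonneg

theorem exp_div_four_le {x : ℝ} (hx : x ≤ 2.0335) : exp (x / 4) ≤ 1.6626 := by
  have taylor_bound : exp (2.0335 / 4) ≤ 1.6626 := by
    refine (exp_bound' (by norm_num) (by norm_num) (n := 8) (by norm_num)).trans ?_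
    norm_num [Finset.sum_range_succ, Nat.factorial]
  exact (exp_le_exp.mpr (by gcongr)).trans taylor_bound

theorem mecbf_inequality_general (α β m : ℝ) (hα : 0 < α) (hβ : 0 < β) (hm : m ≤ 2.0335) :
    |mecbf α β m| ≤ 1.6626 * betaFn α β := by
  have posPart_le : m⁺ ≤ 2.0335 := sup_le hm (by norm_num)
  calc |mecbf α β m| ≤ exp (m⁺ / 4) * betaFn α β := abs_mecbf_le hα hβ m
    _ ≤ 1.6626 * betaFn α β :=
      mul_le_mul_of_nonneg_right (exp_div_four_le posPart_le) (betaFn_nonneg α β)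

theorem mecbf_inequality (α β m : ℝ) (hα : 0 < α) (hβ : 0 < β)
    (hm : |m| ≤ 2.0335) :
    |mecbf α β m| ≤ 1.6626 * betaFn α β :=
  mecbf_inequality_general α β m hα hβ ((le_abs_self m).trans hm)
end

section
/- For all real numbers p > 0, q > 0, every real number m, and every real number t, the moment generating integral of the modified extended beta distribution satisfies ∫₀¹ exp(t·x) · x^(p-1) · (1-x)^(q-1) · exp(m·x·(1-x)) dx = Σ_{n=0}^∞ (t^n / n!) · B(p+n, q; m); equivalently, the moment generating function of the distribution with density f(x) = x^(p-1)(1-x)^(q-1) exp(m x(1-x)) / B(p,q;m) on (0,1) equals (1 / B(p,q;m)) · Σ_{n=0}^∞ (t^n / n!) · B(p+n, q; m). -/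
/-!
For a bounded random variable `X` the series `exp (X a) = ∑ Xⁿ aⁿ / n!` is dominated by a constant
times the integrable weight, so it may be integrated term by term against that weight: the
exponential moment is the generating series of the moments. For the weight
`x ^ (p - 1) * (1 - x) ^ (q - 1) * exp (m * x * (1 - x))` on `(0, 1)` the `n`-th moment is again a
modified beta integral, with `p` shifted to `p + n`.
-/

open MeasureTheory Real

open scoped Nat

section ExponentialMoments

variable {Ω 𝔸 : Type*} [MeasurableSpace Ω] {μ : Measure Ω}
  [NormedRing 𝔸] [NormedAlgebra ℝ 𝔸] [CompleteSpace 𝔸]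

theorem hasSum_integral_mul_pow_smul {X f : Ω → ℝ} {R : ℝ} (hX : AEStronglyMeasurable X μ)
    (hXR : ∀ᵐ ω ∂μ, |X ω| ≤ R) (hf : Integrable f μ) (a : 𝔸) :
    HasSum (fun n : ℕ => (∫ ω, f ω * X ω ^ n ∂μ) • ((n ! : ℝ)⁻¹ • a ^ n))
      (∫ ω, f ω • NormedSpace.exp (X ω • a) ∂μ) := by
  simp only [← integral_smul_const]
  have hsummable : Summable fun n : ℕ => ‖(n ! : ℝ)⁻¹ • (R • a) ^ n‖ :=
    NormedSpace.norm_expSeries_summable' (R • a)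
  refine hasSum_integral_of_dominated_convergence
    (fun n ω => |f ω| * ‖(n ! : ℝ)⁻¹ • (R • a) ^ n‖)
    (fun n => (hf.aestronglyMeasurable.mul (hX.pow n)).smul_const _) (fun n => ?_)
    (.of_forall fun ω => hsummable.mul_left _) ?_ (.of_forall fun ω => ?_)
  · filter_upwards [hXR] with ω hω
    have hpow : |X ω| ^ n ≤ |R| ^ n :=
      pow_le_pow_left₀ (abs_nonneg _) (hω.trans (le_abs_self R)) n
    calc ‖(f ω * X ω ^ n) • ((n ! : ℝ)⁻¹ • a ^ n)‖
        = |f ω| * (‖(n ! : ℝ)⁻¹‖ * (|X ω| ^ n * ‖a ^ n‖)) := by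
          simp only [norm_smul, norm_mul, norm_pow, Real.norm_eq_abs]; ring
      _ ≤ |f ω| * (‖(n ! : ℝ)⁻¹‖ * (|R| ^ n * ‖a ^ n‖)) := by gcongr
      _ = |f ω| * ‖(n ! : ℝ)⁻¹ • (R • a) ^ n‖ := by
          simp only [smul_pow, norm_smul, norm_pow, Real.norm_eq_abs]
  · simp only [tsum_mul_left]
    exact hf.abs.mul_const _
  · have hexp := (NormedSpace.exp_series_hasSum_exp' (𝕂 := ℝ) (X ω • a)).const_smul (f ω)
    simpa only [smul_pow, mul_smul, smul_comm (X ω ^ _)] using hexp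

end ExponentialMoments

theorem intervalIntegrable_rpow_mul_one_sub_rpow_s19 {p q : ℝ} (hp : 0 < p) (hq : 0 < q) :
    IntervalIntegrable (fun x : ℝ => x ^ (p - 1) * (1 - x) ^ (q - 1)) volume 0 1 := by
  have hbeta := Complex.betaIntegral_convergent (u := p) (v := q) (by simpa) (by simpa)
  refine hbeta.norm.congr_uIoo fun x hx => ?_
  rw [Set.uIoo_of_le zero_le_one] at hx
  have hx' : 0 < 1 - x := sub_pos.2 hx.2
  have hcast : 1 - (x : ℂ) = ((1 - x : ℝ) : ℂ) := by push_cast; rfl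
  simp [hcast, Complex.norm_cpow_eq_rpow_re_of_pos, hx.1, hx', -Complex.ofReal_sub]

/-- The unnormalised density of the modified extended beta distribution, that is, the integrand
of `mecbf p q m`. -/
noncomputable def mecbfWeight (p q m x : ℝ) : ℝ :=
  x ^ (p - 1) * (1 - x) ^ (q - 1) * exp (m * x * (1 - x))

theorem intervalIntegrable_mecbfWeight {p q : ℝ} (hp : 0 < p) (hq : 0 < q) (m : ℝ) :
    IntervalIntegrable (mecbfWeight p q m) volume 0 1 :=
  (intervalIntegrable_rpow_mul_one_sub_rpow_s19 hp hq).mul_continuousOn (by fun_prop)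

theorem mecbfWeight_mul_pow {x : ℝ} (hx : 0 < x) (p q m : ℝ) (n : ℕ) :
    mecbfWeight p q m x * x ^ n = mecbfWeight (p + n) q m x := by
  have hpow : x ^ (p + n - 1) = x ^ (p - 1) * x ^ n := by
    rw [add_sub_right_comm, rpow_add_natCast hx.ne']
  rw [mecbfWeight, mecbfWeight, hpow]
  ring

theorem integral_mecbfWeight_mul_pow (p q m : ℝ) (n : ℕ) :
    ∫ x in (0 : ℝ)..1, mecbfWeight p q m x * x ^ n = mecbf (p + n) q m := by
  refine intervalIntegral.integral_congr_uIoo fun x hx => ?_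
  rw [Set.uIoo_of_le zero_le_one] at hx
  exact mecbfWeight_mul_pow hx.1 p q m n

section MomentGeneratingFunction

variable {𝔸 : Type*} [NormedRing 𝔸] [NormedAlgebra ℝ 𝔸] [CompleteSpace 𝔸]

theorem hasSum_mecbf_smul {p q : ℝ} (hp : 0 < p) (hq : 0 < q) (m : ℝ) (t : 𝔸) :
    HasSum (fun n : ℕ => mecbf (p + n) q m • ((n ! : ℝ)⁻¹ • t ^ n))
      (∫ x in (0 : ℝ)..1, mecbfWeight p q m x • NormedSpace.exp (x • t)) := by
  have hbound : ∀ᵐ x ∂volume.restrict (Set.Ioc (0 : ℝ) 1), |x| ≤ 1 := by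
    filter_upwards [ae_restrict_mem measurableSet_Ioc] with x hx
    exact (abs_of_pos hx.1).trans_le hx.2
  have hsum := hasSum_integral_mul_pow_smul aestronglyMeasurable_id hbound
    (intervalIntegrable_mecbfWeight hp hq m).1 t
  simpa only [id, ← intervalIntegral.integral_of_le zero_le_one, integral_mecbfWeight_mul_pow]
    using hsum

theorem mecbf_mgf_general (p q m : ℝ) (t : 𝔸) (hp : 0 < p) (hq : 0 < q) :
    (∫ x in (0 : ℝ)..1, mecbfWeight p q m x • NormedSpace.exp (x • t)) =
      ∑' n : ℕ, mecbf (p + n) q m • ((n ! : ℝ)⁻¹ • t ^ n) ∧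
    (∫ x in (0 : ℝ)..1, (mecbfWeight p q m x / mecbf p q m) • NormedSpace.exp (x • t)) =
      (1 / mecbf p q m) • ∑' n : ℕ, mecbf (p + n) q m • ((n ! : ℝ)⁻¹ • t ^ n) := by
  have hmgf := (hasSum_mecbf_smul hp hq m t).tsum_eq.symm
  refine ⟨hmgf, ?_⟩
  rw [← hmgf, ← intervalIntegral.integral_smul]
  simp only [smul_smul, one_div_mul_eq_div]

end MomentGeneratingFunction

theorem mecbf_mgf (p q m t : ℝ) (hp : 0 < p) (hq : 0 < q) :
    (∫ x in (0:ℝ)..1,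
        Real.exp (t * x) * (x ^ (p - 1) * (1 - x) ^ (q - 1) * Real.exp (m * x * (1 - x)))) =
      ∑' n : ℕ, t ^ n / (n.factorial : ℝ) * mecbf (p + n) q m ∧
    (∫ x in (0:ℝ)..1,
        Real.exp (t * x) *
          (x ^ (p - 1) * (1 - x) ^ (q - 1) * Real.exp (m * x * (1 - x)) / mecbf p q m)) =
      (1 / mecbf p q m) * ∑' n : ℕ, t ^ n / (n.factorial : ℝ) * mecbf (p + n) q m := by
  simpa only [mecbfWeight, smul_eq_mul, ← Real.exp_eq_exp_ℝ, div_eq_mul_inv, mul_comm]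
    using mecbf_mgf_general p q m t hp hq
end
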